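/- Assume p = 1 a.e. and that w has exactly n turning points in (a,b). Fix l, r ∈ ℝ and let α, β, γ be built from c := |l| + |r| (with ‖1/p‖_{L¹} = b − a). Let ε > 0 satisfy μ₁({x ∈ (a,b) : |w(x)| < ε}) ≤ 1/(4γ²), where μ₁ is Lebesgue measure. Then every λ ∈ ℂ with Im λ ≠ 0 for which there exists a solution (φ, u) of −φ'' + qφ = λwφ with φ not identically zero and u(a) = l·φ(a), u(b) = r·φ(b), satisfies |Im λ| ≤ (8/ε)·β·γ²·(n+1) and |Re λ| ≤ (2/ε)·(4βγ²(n+1) + β² + γ²‖q‖_{L¹}). -/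

import Mathlib

open MeasureTheory Real Complex

/-!
For a solution `(φ, u)` the Lagrange form `u * conj φ` is an integral primitive of
`‖u‖² + q ‖φ‖² - λ w ‖φ‖²`. Over all of `[a, b]` the boundary values of this form are real, so
`Im λ ≠ 0` forces `∫ w ‖φ‖² = 0`; what is left bounds `∫ ‖u‖²` by `α sup ‖φ‖²`. Since `sup ‖φ‖²` is
in turn at most `2 ∫ ‖φ‖ ‖u‖` plus the mean of `‖φ‖²`, Cauchy–Schwarz gives `‖u‖₂ ≤ β ‖φ‖₂` and
`‖φ‖_∞ ≤ γ ‖φ‖₂`.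

On each of the `n` intervals where `w` has constant sign, test the same primitive with a trapezoid
`h` of slope `M` vanishing at the two endpoints, and integrate by parts: this bounds
`|Im λ| ∫ h |w| ‖φ‖²` by `M ∫ ‖u‖ ‖φ‖`, and `|Re λ| ∫ h |w| ‖φ‖²` by the same plus
`∫ |‖u‖² + q ‖φ‖²|`. With `M = 4 γ² n`, the corners of the trapezoids and the set `{|w| < ε}` each
lose at most a quarter of `‖φ‖₂²`, so `∫ h |w| ‖φ‖² ≥ ε ‖φ‖₂² / 2`.
-/

section IntegralPrimitives

open Set Filter Topology ComplexConjugate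

variable {E : Type*} [NormedAddCommGroup E] [NormedSpace ℝ E] {F f : ℝ → E} {a b : ℝ}

/-- `F` is an integral primitive of the integrable function `f` on the interval with endpoints `a`
and `b`. -/
structure IsPrimitiveOn (F f : ℝ → E) (a b : ℝ) : Prop where
  intervalIntegrable : IntervalIntegrable f volume a b
  eq_add_integral : ∀ y ∈ uIcc a b, F y = F a + ∫ t in a..y, f t

namespace IsPrimitiveOn

theorem intervalIntegrable_of_mem (hF : IsPrimitiveOn F f a b) {c d : ℝ} (hc : c ∈ uIcc a b)
    (hd : d ∈ uIcc a b) : IntervalIntegrable f volume c d :=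
  hF.intervalIntegrable.mono_set (uIcc_subset_uIcc hc hd)

theorem sub_eq_integral (hF : IsPrimitiveOn F f a b) {c d : ℝ} (hc : c ∈ uIcc a b)
    (hd : d ∈ uIcc a b) : F d - F c = ∫ t in c..d, f t := by
  rw [hF.eq_add_integral c hc, hF.eq_add_integral d hd, add_sub_add_left_eq_sub,
    intervalIntegral.integral_interval_sub_left (hF.intervalIntegrable_of_mem left_mem_uIcc hd)
      (hF.intervalIntegrable_of_mem left_mem_uIcc hc)]

theorem mono (hF : IsPrimitiveOn F f a b) {c d : ℝ} (h : uIcc c d ⊆ uIcc a b) :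
    IsPrimitiveOn F f c d where
  intervalIntegrable := hF.intervalIntegrable.mono_set h
  eq_add_integral y hy := by
    rw [← hF.sub_eq_integral (h left_mem_uIcc) (h hy), add_sub_cancel]

theorem continuousOn (hF : IsPrimitiveOn F f a b) : ContinuousOn F (uIcc a b) :=
  (continuousOn_const.add
    (intervalIntegral.continuousOn_primitive_interval' hF.intervalIntegrable left_mem_uIcc)).congr
    hF.eq_add_integral

theorem clm_comp {G : Type*} [NormedAddCommGroup G] [NormedSpace ℝ G] [CompleteSpace E]
    [CompleteSpace G] (L : E →L[ℝ] G) (hF : IsPrimitiveOn F f a b) :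
    IsPrimitiveOn (fun t => L (F t)) (fun t => L (f t)) a b where
  intervalIntegrable := ⟨L.integrable_comp hF.intervalIntegrable.1,
    L.integrable_comp hF.intervalIntegrable.2⟩
  eq_add_integral y hy := by
    rw [L.intervalIntegral_comp_comm (hF.intervalIntegrable_of_mem left_mem_uIcc hy), ← map_add,
      ← hF.eq_add_integral y hy]

theorem absolutelyContinuousOnInterval (hF : IsPrimitiveOn F f a b) :
    AbsolutelyContinuousOnInterval F a b := by
  have hnorm := hF.intervalIntegrable.norm.absolutelyContinuousOnInterval_intervalIntegral
    (left_mem_uIcc (a := a) (b := b))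
  refine squeeze_zero' (.of_forall fun _ => Finset.sum_nonneg fun _ _ => dist_nonneg) ?_ hnorm
  filter_upwards [eventually_inf_principal.mpr (.of_forall fun _ h => h)] with I hI
  refine Finset.sum_le_sum fun i hi => ?_
  obtain ⟨hc, hd⟩ := hI.1 i hi
  rw [dist_comm, dist_eq_norm, hF.sub_eq_integral hc hd, dist_comm, Real.dist_eq,
    intervalIntegral.integral_interval_sub_left
      (hF.intervalIntegrable_of_mem left_mem_uIcc hd).norm
      (hF.intervalIntegrable_of_mem left_mem_uIcc hc).norm]
  exact intervalIntegral.norm_integral_le_abs_integral_norm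

theorem ae_hasDerivAt [CompleteSpace E] (hF : IsPrimitiveOn F f a b) :
    ∀ᵐ t, t ∈ uIcc a b → HasDerivAt F (f t) t := by
  filter_upwards [hF.intervalIntegrable.ae_hasDerivAt_integral, Measure.ae_ne volume a,
    Measure.ae_ne volume b] with t ht hta htb hmem
  refine ((ht hmem a left_mem_uIcc).const_add (F a)).congr_of_eventuallyEq ?_
  have hnhds : uIcc a b ∈ 𝓝 t := by
    refine Icc_mem_nhds (hmem.1.lt_of_ne ?_) (hmem.2.lt_of_ne ?_) <;> grind
  exact eventually_of_mem hnhds hF.eq_add_integral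

end IsPrimitiveOn

theorem IsPrimitiveOn.of_absolutelyContinuousOnInterval [CompleteSpace E]
    (hF : AbsolutelyContinuousOnInterval F a b) (hf : IntervalIntegrable f volume a b)
    (hderiv : ∀ᵐ t, t ∈ uIcc a b → HasDerivAt F (f t) t) : IsPrimitiveOn F f a b := by
  have hprim : IsPrimitiveOn (fun y => ∫ t in a..y, f t) f a b := ⟨hf, fun y _ => by simp⟩
  obtain ⟨C, hC⟩ := (hF.fun_sub hprim.absolutelyContinuousOnInterval).const_of_ae_hasDerivAt_zero
    (by
      filter_upwards [hderiv, hprim.ae_hasDerivAt] with t ht ht' hmem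
      simpa only [sub_self] using (ht hmem).fun_sub (ht' hmem))
  refine ⟨hf, fun y hy => ?_⟩
  have hCa := hC a left_mem_uIcc
  rw [intervalIntegral.integral_same, sub_zero] at hCa
  rw [hCa, ← hC y hy, sub_add_cancel]

theorem IsPrimitiveOn.smul {𝕜 : Type*} [RCLike 𝕜] [NormedSpace 𝕜 E]
    [CompleteSpace E] {G g : ℝ → 𝕜} (hG : IsPrimitiveOn G g a b) (hF : IsPrimitiveOn F f a b) :
    IsPrimitiveOn (fun t => G t • F t) (fun t => G t • f t + g t • F t) a b := by
  refine IsPrimitiveOn.of_absolutelyContinuousOnInterval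
    (hG.absolutelyContinuousOnInterval.fun_smul hF.absolutelyContinuousOnInterval)
    ((hF.intervalIntegrable.continuousOn_smul hG.continuousOn).add
      (hG.intervalIntegrable.smul_continuousOn hF.continuousOn)) ?_
  filter_upwards [hG.ae_hasDerivAt, hF.ae_hasDerivAt] with t hGt hFt hmem
  exact (hGt hmem).smul (hFt hmem)

theorem IsPrimitiveOn.deriv_of_lipschitzOnWith {h : ℝ → ℝ} {K : NNReal}
    (hh : LipschitzOnWith K h (uIcc a b)) : IsPrimitiveOn h (deriv h) a b := by
  have hac := hh.absolutelyContinuousOnInterval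
  refine IsPrimitiveOn.of_absolutelyContinuousOnInterval hac hac.intervalIntegrable_deriv ?_
  filter_upwards [hac.ae_differentiableAt] with t ht hmem
  exact (ht hmem).hasDerivAt

theorem IsPrimitiveOn.norm_integral_smul_le [CompleteSpace E] (hF : IsPrimitiveOn F f a b)
    (hab : a ≤ b) {h : ℝ → ℝ} {K : NNReal} (hh : LipschitzWith K h) (ha : h a = 0) (hb : h b = 0) :
    ‖∫ t in a..b, h t • f t‖ ≤ K * ∫ t in a..b, ‖F t‖ := by
  have hprim := IsPrimitiveOn.deriv_of_lipschitzOnWith (a := a) (b := b) hh.lipschitzOnWith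
  have hparts := (hprim.smul hF).sub_eq_integral left_mem_uIcc right_mem_uIcc
  rw [ha, hb, zero_smul, zero_smul, sub_zero, intervalIntegral.integral_add
    (hF.intervalIntegrable.continuousOn_smul hprim.continuousOn)
    (hprim.intervalIntegrable.smul_continuousOn hF.continuousOn)] at hparts
  rw [eq_neg_of_add_eq_zero_left hparts.symm, norm_neg, ← intervalIntegral.integral_const_mul]
  refine intervalIntegral.norm_integral_le_of_norm_le hab (.of_forall fun t _ => ?_)
    (hF.continuousOn.norm.intervalIntegrable.const_mul _)
  rw [norm_smul]
  gcongr
  exact norm_deriv_le_of_lipschitz hh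

theorem IsPrimitiveOn.conj {𝕜 : Type*} [RCLike 𝕜] {F f : ℝ → 𝕜} (hF : IsPrimitiveOn F f a b) :
    IsPrimitiveOn (fun t => conj (F t)) (fun t => conj (f t)) a b := by
  simpa using hF.clm_comp (RCLike.conjCLE (K := 𝕜) : 𝕜 →L[ℝ] 𝕜)

theorem IsPrimitiveOn.norm_sq_sub_norm_sq_le {𝕜 : Type*} [RCLike 𝕜] {F f : ℝ → 𝕜}
    (hF : IsPrimitiveOn F f a b) (hab : a ≤ b) {c d : ℝ} (hc : c ∈ Icc a b) (hd : d ∈ Icc a b) :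
    ‖F d‖ ^ 2 - ‖F c‖ ^ 2 ≤ 2 * ∫ t in a..b, ‖F t‖ * ‖f t‖ := by
  rw [← uIcc_of_le hab] at hc hd
  have hmajorant : IntervalIntegrable (fun t => 2 * (‖F t‖ * ‖f t‖)) volume a b :=
    (hF.intervalIntegrable.norm.continuousOn_mul hF.continuousOn.norm).const_mul 2
  calc ‖F d‖ ^ 2 - ‖F c‖ ^ 2
      ≤ ‖∫ t in c..d, (F t • conj (f t) + f t • conj (F t))‖ := by
        rw [← (hF.smul hF.conj).sub_eq_integral hc hd]
        simp only [smul_eq_mul, RCLike.mul_conj]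
        norm_cast
        exact le_abs_self _
    _ ≤ |∫ t in c..d, 2 * (‖F t‖ * ‖f t‖)| := by
        refine intervalIntegral.norm_integral_le_abs_of_norm_le (.of_forall fun t => ?_)
          (hmajorant.mono_set (uIcc_subset_uIcc hc hd))
        refine (norm_add_le _ _).trans_eq ?_
        simp only [smul_eq_mul, norm_mul, RCLike.norm_conj]
        ring
    _ ≤ |∫ t in a..b, 2 * (‖F t‖ * ‖f t‖)| :=
        intervalIntegral.abs_integral_mono_interval
          (Ioc_subset_Ioc (by grind [uIcc]) (by grind [uIcc]))
          (.of_forall fun t => by positivity) hmajorant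
    _ = 2 * ∫ t in a..b, ‖F t‖ * ‖f t‖ := by
        rw [abs_of_nonneg (intervalIntegral.integral_nonneg hab fun t _ => by positivity),
          intervalIntegral.integral_const_mul]

theorem IsPrimitiveOn.norm_sq_le {𝕜 : Type*} [RCLike 𝕜] {F f : ℝ → 𝕜}
    (hF : IsPrimitiveOn F f a b) (hab : a < b) {y : ℝ} (hy : y ∈ Icc a b) :
    ‖F y‖ ^ 2 ≤ 2 * (∫ t in a..b, ‖F t‖ * ‖f t‖) + (∫ t in a..b, ‖F t‖ ^ 2) / (b - a) := by
  obtain ⟨c, hc, hmean⟩ :=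
    exists_eq_interval_average (f := fun t => ‖F t‖ ^ 2) hab.ne (hF.continuousOn.norm.pow 2)
  rw [uIoo_of_le hab.le] at hc
  rw [← interval_average_eq_div, ← hmean, ← sub_le_iff_le_add]
  exact hF.norm_sq_sub_norm_sq_le hab.le (Ioo_subset_Icc_self hc) hy

end IntegralPrimitives

section Trapezoid

open Set

variable {M p q t : ℝ}

theorem integral_max_zero_one_sub_mul_le (hM : 0 < M) (L : ℝ) :
    ∫ t in 0..L, max 0 (1 - M * t) ≤ 1 / (2 * M) := by
  have hcont : Continuous fun t => max 0 (1 - M * t) := by fun_prop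
  have hbelow : ∫ t in 0..M⁻¹, max 0 (1 - M * t) = 1 / (2 * M) := by
    have hpos : ∀ t ∈ uIcc 0 M⁻¹, max 0 (1 - M * t) = 1 - M * t := fun t ht => by
      rw [uIcc_of_le (by positivity)] at ht
      exact max_eq_right (sub_nonneg.mpr ((le_inv_mul_iff₀ hM).mp (by simpa using ht.2)))
    rw [intervalIntegral.integral_congr hpos,
      intervalIntegral.integral_sub (by simp) (Continuous.intervalIntegrable (by fun_prop) _ _),
      intervalIntegral.integral_const_mul, integral_id, intervalIntegral.integral_const]
    simp only [smul_eq_mul]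
    field
  have habove : ∫ t in M⁻¹..L, max 0 (1 - M * t) ≤ 0 := by
    rcases le_total L M⁻¹ with hL | hL
    · rw [intervalIntegral.integral_symm, neg_nonpos]
      exact intervalIntegral.integral_nonneg hL fun t _ => le_max_left _ _
    · refine (intervalIntegral.integral_zero_ae (.of_forall fun t ht => max_eq_left ?_)).le
      rw [uIoc_of_le hL] at ht
      exact sub_nonpos.mpr ((inv_mul_le_iff₀ hM).mp (by simpa using ht.1.le))
  rw [← intervalIntegral.integral_add_adjacent_intervals (hcont.intervalIntegrable 0 M⁻¹)
    (hcont.intervalIntegrable M⁻¹ L), hbelow]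
  linarith

/-- The trapezoidal cutoff function for the interval `[p, q]`: it vanishes at the endpoints, rises
and falls with slope `M`, and is capped at `1`. Outside `[p, q]` it is negative. -/
def trapezoid (M p q t : ℝ) : ℝ := min 1 (M * min (t - p) (q - t))

theorem trapezoid_left (hpq : p ≤ q) : trapezoid M p q p = 0 := by
  simp [trapezoid, hpq]

theorem trapezoid_right (hpq : p ≤ q) : trapezoid M p q q = 0 := by
  simp [trapezoid, hpq]

theorem trapezoid_le_one : trapezoid M p q t ≤ 1 := min_le_left _ _

theorem trapezoid_nonneg (hM : 0 ≤ M) (ht : t ∈ Icc p q) : 0 ≤ trapezoid M p q t :=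
  le_min zero_le_one
    (mul_nonneg hM (le_min (sub_nonneg.mpr ht.1) (sub_nonneg.mpr ht.2)))

theorem lipschitzWith_trapezoid (M : NNReal) (p q : ℝ) : LipschitzWith M (trapezoid M p q) := by
  have hmin : LipschitzWith 1 fun t : ℝ => min (t - p) (q - t) := by
    simpa using (LipschitzWith.id.sub (LipschitzWith.const p)).min
      ((LipschitzWith.const q).sub LipschitzWith.id)
  simpa [trapezoid, Function.comp_def] using! ((lipschitzWith_smul (M : ℝ)).comp hmin).const_min 1

theorem integral_one_sub_trapezoid_le (hM : 0 < M) (hpq : p ≤ q) :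
    ∫ t in p..q, (1 - trapezoid M p q t) ≤ 1 / M := by
  calc ∫ t in p..q, (1 - trapezoid M p q t)
      ≤ ∫ t in p..q, (max 0 (1 - M * (t - p)) + max 0 (1 - M * (q - t))) := by
        refine intervalIntegral.integral_mono_on hpq ?_ ?_ fun t _ => ?_
        · unfold trapezoid
          exact Continuous.intervalIntegrable (by fun_prop) _ _
        · exact Continuous.intervalIntegrable (by fun_prop) _ _
        · unfold trapezoid
          grind
    _ = (∫ t in p..q, max 0 (1 - M * (t - p))) + ∫ t in p..q, max 0 (1 - M * (q - t)) :=
        intervalIntegral.integral_add (Continuous.intervalIntegrable (by fun_prop) _ _)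
          (Continuous.intervalIntegrable (by fun_prop) _ _)
    _ = (∫ t in 0..(q - p), max 0 (1 - M * t)) + ∫ t in 0..(q - p), max 0 (1 - M * t) := by
        rw [intervalIntegral.integral_comp_sub_right (fun t => max 0 (1 - M * t)),
          intervalIntegral.integral_comp_sub_left (fun t => max 0 (1 - M * t)), sub_self, sub_self]
    _ ≤ 1 / (2 * M) + 1 / (2 * M) :=
        add_le_add (integral_max_zero_one_sub_mul_le hM _) (integral_max_zero_one_sub_mul_le hM _)
    _ = 1 / M := by field

end Trapezoid

section RealAnalysis

open Set

theorem intervalIntegral_norm_mul_norm_le_sqrt_mul_sqrt {E G : Type*} [NormedAddCommGroup E]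
    [NormedAddCommGroup G] {f : ℝ → E} {g : ℝ → G} {a b : ℝ} (hab : a ≤ b)
    (hf : ContinuousOn f (Icc a b)) (hg : ContinuousOn g (Icc a b)) :
    ∫ t in a..b, ‖f t‖ * ‖g t‖ ≤ √(∫ t in a..b, ‖f t‖ ^ 2) * √(∫ t in a..b, ‖g t‖ ^ 2) := by
  have hLp {h : ℝ → ℝ} (hh : ContinuousOn h (Icc a b)) :
      MemLp h (ENNReal.ofReal 2) (volume.restrict (Ioc a b)) := by
    rw [ENNReal.ofReal_ofNat, memLp_two_iff_integrable_sq]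
    · exact (hh.pow 2).integrableOn_Icc.mono_set Ioc_subset_Icc_self
    · exact (hh.mono Ioc_subset_Icc_self).aestronglyMeasurable measurableSet_Ioc
  have holder := integral_mul_le_Lp_mul_Lq_of_nonneg Real.HolderConjugate.two_two
    (.of_forall fun t => norm_nonneg (f t)) (.of_forall fun t => norm_nonneg (g t))
    (hLp hf.norm) (hLp hg.norm)
  simpa only [intervalIntegral.integral_of_le hab, Real.sqrt_eq_rpow, Real.rpow_two] using holder

theorem le_sqrt_add_mul_of_sq_le {α D N κ : ℝ} (hN : 0 ≤ N)
    (h : D ^ 2 ≤ α * (2 * (D * N) + N ^ 2 * κ)) : D ≤ (√(α * (κ + α)) + α) * N := by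
  have hsq : (D - α * N) ^ 2 ≤ α * (κ + α) * N ^ 2 := by linarith
  have hle := Real.abs_le_sqrt hsq
  rw [Real.sqrt_mul' _ (sq_nonneg N), Real.sqrt_sq hN] at hle
  linarith [le_abs_self (D - α * N)]

theorem le_two_div_mul_of_mul_mul_le {τ ε N K R : ℝ} (hτ : 0 ≤ τ) (hε : 0 < ε) (hN : 0 < N)
    (hK : N / 2 ≤ K) (h : τ * ε * K ≤ R * N) : τ ≤ 2 / ε * R := by
  have hRN : τ * ε / 2 * N ≤ R * N := by
    linarith [mul_le_mul_of_nonneg_left hK (mul_nonneg hτ hε.le)]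
  have hR := le_of_mul_le_mul_right hRN hN
  rw [div_mul_eq_mul_div, le_div_iff₀ hε]
  linarith

theorem mul_integral_sub_le_integral_of_partition {f g : ℝ → ℝ} {x : ℕ → ℝ} {n : ℕ} {C d : ℝ}
    (hf : ∀ k < n, IntervalIntegrable f volume (x k) (x (k + 1)))
    (hg : ∀ k < n, IntervalIntegrable g volume (x k) (x (k + 1)))
    (h : ∀ k < n, C * ((∫ t in x k..x (k + 1), f t) - d) ≤ ∫ t in x k..x (k + 1), g t) :
    C * ((∫ t in x 0..x n, f t) - n * d) ≤ ∫ t in x 0..x n, g t := by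
  have hsum := Finset.sum_le_sum fun k hk => h k (Finset.mem_range.mp hk)
  rwa [← Finset.mul_sum, Finset.sum_sub_distrib, Finset.sum_const, Finset.card_range,
    nsmul_eq_mul, intervalIntegral.sum_integral_adjacent_intervals hf,
    intervalIntegral.sum_integral_adjacent_intervals hg] at hsum

theorem intervalIntegrable_indicator_abs_lt {w : ℝ → ℝ} {a b : ℝ}
    (hw : IntervalIntegrable w volume a b) (ε S : ℝ) :
    IntervalIntegrable ({t | |w t| < ε}.indicator fun _ => S) volume a b := by
  rw [intervalIntegrable_iff]
  exact (intervalIntegrable_iff.mp intervalIntegrable_const).indicator₀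
    (nullMeasurableSet_lt hw.def'.aemeasurable.abs aemeasurable_const)

theorem integral_indicator_abs_lt_le {w : ℝ → ℝ} {a b ε S δ : ℝ} (hab : a ≤ b)
    (hw : IntervalIntegrable w volume a b) (hS : 0 ≤ S) (hδ : 0 ≤ δ)
    (hvol : volume {t | t ∈ Ioo a b ∧ |w t| < ε} ≤ ENNReal.ofReal δ) :
    ∫ t in a..b, {t | |w t| < ε}.indicator (fun _ => S) t ≤ S * δ := by
  have hmeas : NullMeasurableSet {t | |w t| < ε} (volume.restrict (Ioo a b)) :=
    nullMeasurableSet_lt (hw.1.aemeasurable.abs.mono_measure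
      (Measure.restrict_mono Ioo_subset_Ioc_self le_rfl)) aemeasurable_const
  rw [intervalIntegral.integral_of_le hab, integral_Ioc_eq_integral_Ioo,
    integral_indicator₀ hmeas, setIntegral_const, smul_eq_mul, mul_comm, Measure.real,
    Measure.restrict_apply₀ hmeas, inter_comm]
  exact mul_le_mul_of_nonneg_left (ENNReal.toReal_le_of_le_ofReal hδ hvol) hS

end RealAnalysis

section TrapezoidTest

open Set

variable {P : ℝ → ℂ} {e v : ℝ → ℝ} {lam : ℂ} {p q M : ℝ}

theorem integral_ofReal_sub_mul_ofReal (he : IntervalIntegrable e volume p q)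
    (hv : IntervalIntegrable v volume p q) (lam : ℂ) :
    ∫ t in p..q, ((e t : ℂ) - lam * v t) =
      ((∫ t in p..q, e t : ℝ) : ℂ) - lam * ((∫ t in p..q, v t : ℝ) : ℂ) := by
  have heC : IntervalIntegrable (fun t => (e t : ℂ)) volume p q := ⟨he.1.ofReal, he.2.ofReal⟩
  have hvC : IntervalIntegrable (fun t => (v t : ℂ)) volume p q := ⟨hv.1.ofReal, hv.2.ofReal⟩
  rw [intervalIntegral.integral_sub heC (hvC.const_mul lam),
    intervalIntegral.integral_const_mul, intervalIntegral.integral_ofReal,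
    intervalIntegral.integral_ofReal]

theorem IsPrimitiveOn.integral_eq_re_sub
    (hP : IsPrimitiveOn P (fun t => e t - lam * v t) p q)
    (he : IntervalIntegrable e volume p q) (hv : IntervalIntegrable v volume p q)
    (hlam : lam.im ≠ 0) (him : (P q).im = (P p).im) :
    ∫ t in p..q, e t = (P q - P p).re := by
  have hsub := hP.sub_eq_integral left_mem_uIcc right_mem_uIcc
  rw [integral_ofReal_sub_mul_ofReal he hv] at hsub
  have hv0 : ∫ t in p..q, v t = 0 := by simpa [him, hlam] using congrArg Complex.im hsub
  simp [hsub, hv0]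

theorem abs_im_mul_abs_le_norm_sub (lam : ℂ) (X J : ℝ) :
    |lam.im| * |J| ≤ ‖(X : ℂ) - lam * J‖ := by
  simpa [abs_mul] using abs_im_le_norm ((X : ℂ) - lam * J)

theorem abs_re_mul_abs_le_add_norm_sub (lam : ℂ) (X J : ℝ) :
    |lam.re| * |J| ≤ |X| + ‖(X : ℂ) - lam * J‖ := by
  have hre : |X - lam.re * J| ≤ ‖(X : ℂ) - lam * J‖ := by
    simpa using abs_re_le_norm ((X : ℂ) - lam * J)
  rw [← abs_mul]
  linarith [abs_sub_abs_le_abs_sub (lam.re * J) X, abs_sub_comm (lam.re * J) X]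

theorem IsPrimitiveOn.norm_integral_trapezoid_le
    (hP : IsPrimitiveOn P (fun t => e t - lam * v t) p q) (hpq : p ≤ q) (hM : 0 ≤ M)
    (he : IntervalIntegrable e volume p q) (hv : IntervalIntegrable v volume p q) :
    ‖((∫ t in p..q, trapezoid M p q t * e t : ℝ) : ℂ) -
      lam * ((∫ t in p..q, trapezoid M p q t * v t : ℝ) : ℂ)‖ ≤ M * ∫ t in p..q, ‖P t‖ := by
  lift M to NNReal using hM
  have hlip := lipschitzWith_trapezoid M p q
  have htest := hP.norm_integral_smul_le hpq hlip (trapezoid_left hpq) (trapezoid_right hpq)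
  have hsplit t : trapezoid M p q t • ((e t : ℂ) - lam * v t) =
      ((trapezoid M p q t * e t : ℝ) : ℂ) - lam * ((trapezoid M p q t * v t : ℝ) : ℂ) := by
    rw [real_smul, ofReal_mul, ofReal_mul]
    ring
  simp only [hsplit] at htest
  rwa [integral_ofReal_sub_mul_ofReal (he.continuousOn_mul hlip.continuous.continuousOn)
    (hv.continuousOn_mul hlip.continuous.continuousOn)] at htest

theorem abs_integral_trapezoid_mul_le (hpq : p ≤ q) (hM : 0 ≤ M)
    (he : IntervalIntegrable e volume p q) :
    |∫ t in p..q, trapezoid M p q t * e t| ≤ ∫ t in p..q, |e t| := by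
  rw [← Real.norm_eq_abs]
  refine intervalIntegral.norm_integral_le_of_norm_le hpq (.of_forall fun t ht => ?_) he.norm
  rw [norm_mul, Real.norm_of_nonneg (trapezoid_nonneg hM (Ioc_subset_Icc_self ht))]
  exact mul_le_of_le_one_left (norm_nonneg _) trapezoid_le_one

theorem mul_sub_indicator_sub_le_mul_mul {w : ℝ → ℝ} {ε S h A t : ℝ} (hε : 0 ≤ ε) (hh0 : 0 ≤ h)
    (hh1 : h ≤ 1) (hA0 : 0 ≤ A) (hAS : A ≤ S) :
    ε * (A - {t | |w t| < ε}.indicator (fun _ => S) t - S * (1 - h)) ≤ |w t| * (h * A) := by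
  have hcut : A - S * (1 - h) ≤ h * A := by nlinarith
  by_cases hw : |w t| < ε
  · rw [indicator_of_mem (by exact hw)]
    calc ε * (A - S - S * (1 - h)) ≤ 0 :=
          mul_nonpos_of_nonneg_of_nonpos hε (by nlinarith)
      _ ≤ |w t| * (h * A) := by positivity
  · rw [indicator_of_notMem (by exact hw), sub_zero]
    calc ε * (A - S * (1 - h)) ≤ ε * (h * A) := by gcongr
      _ ≤ |w t| * (h * A) := by
          gcongr
          exact not_lt.mp hw

theorem mul_integral_sub_le_abs_integral_trapezoid {w A : ℝ → ℝ} {ε S σ : ℝ} (hpq : p ≤ q)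
    (hM : 0 < M) (hε : 0 ≤ ε) (hw : IntervalIntegrable w volume p q)
    (hA : ContinuousOn A (Icc p q)) (hA0 : ∀ t ∈ Icc p q, 0 ≤ A t)
    (hAS : ∀ t ∈ Icc p q, A t ≤ S) (hσ : |σ| = 1)
    (hsign : ∀ᵐ t ∂volume.restrict (Ioo p q), 0 ≤ σ * w t) :
    ε * ((∫ t in p..q, (A t - {t | |w t| < ε}.indicator (fun _ => S) t)) - S / M) ≤
      |∫ t in p..q, trapezoid M p q t * (w t * A t)| := by
  rw [← uIcc_of_le hpq] at hA
  have hS : 0 ≤ S := (hA0 p (left_mem_Icc.mpr hpq)).trans (hAS p (left_mem_Icc.mpr hpq))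
  have htrap : Continuous (trapezoid M p q) := by unfold trapezoid; fun_prop
  have hf := hA.intervalIntegrable.sub (intervalIntegrable_indicator_abs_lt hw ε S)
  have hcut : IntervalIntegrable (fun t => S * (1 - trapezoid M p q t)) volume p q :=
    Continuous.intervalIntegrable (by fun_prop) _ _
  have hloss : S * ∫ t in p..q, (1 - trapezoid M p q t) ≤ S / M :=
    (mul_le_mul_of_nonneg_left (integral_one_sub_trapezoid_le hM hpq) hS).trans_eq
      (mul_one_div S M)
  calc _ ≤ ε * ((∫ t in p..q, (A t - {t | |w t| < ε}.indicator (fun _ => S) t)) -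
          ∫ t in p..q, S * (1 - trapezoid M p q t)) := by
        rw [intervalIntegral.integral_const_mul]
        gcongr
    _ = ∫ t in p..q, ε * (A t - {t | |w t| < ε}.indicator (fun _ => S) t -
          S * (1 - trapezoid M p q t)) := by
        rw [intervalIntegral.integral_const_mul ε, intervalIntegral.integral_sub hf hcut]
    _ ≤ ∫ t in p..q, σ * (trapezoid M p q t * (w t * A t)) := by
        refine intervalIntegral.integral_mono_ae_restrict hpq ((hf.sub hcut).const_mul ε)
          (((hw.mul_continuousOn hA).continuousOn_mul htrap.continuousOn).const_mul σ) ?_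
        rw [Measure.restrict_congr_set Ioo_ae_eq_Icc.symm]
        filter_upwards [hsign, ae_restrict_mem measurableSet_Ioo] with t ht hmem
        have hmem' := Ioo_subset_Icc_self hmem
        refine (mul_sub_indicator_sub_le_mul_mul hε (trapezoid_nonneg hM.le hmem')
          trapezoid_le_one (hA0 t hmem') (hAS t hmem')).trans_eq ?_
        rw [← one_mul |w t|, ← hσ, ← abs_mul, abs_of_nonneg ht]
        ring
    _ ≤ |σ * ∫ t in p..q, trapezoid M p q t * (w t * A t)| := by
        rw [intervalIntegral.integral_const_mul]
        exact le_abs_self _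
    _ = _ := by rw [abs_mul, hσ, one_mul]

end TrapezoidTest

section SignPartition

open Set

/-- The points `x 0 ≤ x 1 ≤ ⋯ ≤ x n` subdivide `[a, b]` into `n` intervals on each of which the
weight `w` has a constant sign `σ = ±1`, up to a null set; so `w` has at most `n - 1` turning
points. -/
structure IsSignPartition (w : ℝ → ℝ) (a b : ℝ) (n : ℕ) (x : ℕ → ℝ) : Prop where
  zero_eq : x 0 = a
  last_eq : x n = b
  monotoneOn : MonotoneOn x (Iic n)
  exists_sign : ∀ k < n, ∃ σ : ℝ, |σ| = 1 ∧
    ∀ᵐ t ∂volume.restrict (Ioo (x k) (x (k + 1))), 0 ≤ σ * w t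

theorem IsSignPartition.pos {w : ℝ → ℝ} {a b : ℝ} {n : ℕ} {x : ℕ → ℝ}
    (hx : IsSignPartition w a b n x) (hab : a < b) : 0 < n := by
  rw [← hx.zero_eq, ← hx.last_eq] at hab
  exact Nat.pos_of_ne_zero fun hn => hab.ne (by rw [hn])

theorem IsSignPartition.le_succ {w : ℝ → ℝ} {a b : ℝ} {n : ℕ} {x : ℕ → ℝ}
    (hx : IsSignPartition w a b n x) {k : ℕ} (hk : k < n) : x k ≤ x (k + 1) :=
  hx.monotoneOn hk.le (Nat.succ_le_of_lt hk) k.le_succ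

theorem IsSignPartition.Icc_subset {w : ℝ → ℝ} {a b : ℝ} {n : ℕ} {x : ℕ → ℝ}
    (hx : IsSignPartition w a b n x) {k : ℕ} (hk : k < n) : Icc (x k) (x (k + 1)) ⊆ Icc a b := by
  rw [← hx.zero_eq, ← hx.last_eq]
  exact Icc_subset_Icc (hx.monotoneOn n.zero_le hk.le k.zero_le)
    (hx.monotoneOn (Nat.succ_le_of_lt hk) self_mem_Iic hk)

theorem IsSignPartition.of_alternating {w : ℝ → ℝ} {a b : ℝ} {n : ℕ} {x : ℕ → ℝ} {s : ℝ}
    (h0 : x 0 = a) (hlast : x (n + 1) = b) (hle : ∀ k ≤ n, x k ≤ x (k + 1)) (hs : |s| = 1)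
    (hsign : ∀ k ≤ n, ∀ᵐ t ∂volume.restrict (Ioo (x k) (x (k + 1))), 0 ≤ s * (-1) ^ k * w t) :
    IsSignPartition w a b (n + 1) x where
  zero_eq := h0
  last_eq := hlast
  monotoneOn := monotoneOn_of_le_add_one ordConnected_Iic fun k _ _ hk =>
    hle k (Nat.le_of_succ_le_succ hk)
  exists_sign k hk := ⟨s * (-1) ^ k, by simp [abs_mul, hs], hsign k (Nat.le_of_lt_succ hk)⟩

variable {P : ℝ → ℂ} {e w A : ℝ → ℝ} {lam : ℂ} {a b M S ε : ℝ}

theorem IsPrimitiveOn.abs_mul_le_of_sign {p q σ : ℝ}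
    (hP : IsPrimitiveOn P (fun t => e t - lam * (w t * A t : ℝ)) p q) (hpq : p ≤ q)
    (he : IntervalIntegrable e volume p q) (hw : IntervalIntegrable w volume p q)
    (hA : ContinuousOn A (Icc p q)) (hA0 : ∀ t ∈ Icc p q, 0 ≤ A t)
    (hAS : ∀ t ∈ Icc p q, A t ≤ S) (hσ : |σ| = 1)
    (hsign : ∀ᵐ t ∂volume.restrict (Ioo p q), 0 ≤ σ * w t) (hM : 0 < M) (hε : 0 ≤ ε) :
    |lam.im| * ε * ((∫ t in p..q, (A t - {t | |w t| < ε}.indicator (fun _ => S) t)) - S / M) ≤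
        ∫ t in p..q, M * ‖P t‖ ∧
      |lam.re| * ε * ((∫ t in p..q, (A t - {t | |w t| < ε}.indicator (fun _ => S) t)) - S / M) ≤
        ∫ t in p..q, (|e t| + M * ‖P t‖) := by
  have hJ := mul_integral_sub_le_abs_integral_trapezoid hpq hM hε hw hA hA0 hAS hσ hsign
  have htest := hP.norm_integral_trapezoid_le hpq hM.le he
    (hw.mul_continuousOn (by rwa [uIcc_of_le hpq]))
  have hX := abs_integral_trapezoid_mul_le hpq hM.le he
  rw [intervalIntegral.integral_add he.abs (hP.continuousOn.norm.intervalIntegrable.const_mul M),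
    intervalIntegral.integral_const_mul, mul_assoc, mul_assoc]
  exact ⟨(mul_le_mul_of_nonneg_left hJ (abs_nonneg _)).trans
      ((abs_im_mul_abs_le_norm_sub _ _ _).trans htest),
    (mul_le_mul_of_nonneg_left hJ (abs_nonneg _)).trans
      ((abs_re_mul_abs_le_add_norm_sub _ _ _).trans (add_le_add hX htest))⟩

theorem IsPrimitiveOn.abs_mul_le_of_isSignPartition {n : ℕ} {x : ℕ → ℝ}
    (hP : IsPrimitiveOn P (fun t => e t - lam * (w t * A t : ℝ)) a b) (hab : a ≤ b)
    (hx : IsSignPartition w a b n x)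
    (he : IntervalIntegrable e volume a b) (hw : IntervalIntegrable w volume a b)
    (hA : ContinuousOn A (Icc a b)) (hA0 : ∀ t ∈ Icc a b, 0 ≤ A t)
    (hAS : ∀ t ∈ Icc a b, A t ≤ S) (hM : 0 < M) (hε : 0 ≤ ε) :
    |lam.im| * ε *
        ((∫ t in a..b, (A t - {t | |w t| < ε}.indicator (fun _ => S) t)) - n * (S / M)) ≤
        ∫ t in a..b, M * ‖P t‖ ∧
      |lam.re| * ε *
        ((∫ t in a..b, (A t - {t | |w t| < ε}.indicator (fun _ => S) t)) - n * (S / M)) ≤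
        ∫ t in a..b, (|e t| + M * ‖P t‖) := by
  have hsub k (hk : k < n) : uIcc (x k) (x (k + 1)) ⊆ uIcc a b := by
    rw [uIcc_of_le hab, uIcc_of_le (hx.le_succ hk)]
    exact hx.Icc_subset hk
  have hf : IntervalIntegrable (fun t => A t - {t | |w t| < ε}.indicator (fun _ => S) t)
      volume a b :=
    ContinuousOn.intervalIntegrable (by rwa [uIcc_of_le hab]) |>.sub
      (intervalIntegrable_indicator_abs_lt hw ε S)
  have hg : IntervalIntegrable (fun t => M * ‖P t‖) volume a b :=
    hP.continuousOn.norm.intervalIntegrable.const_mul M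
  choose σ hσ hsign using hx.exists_sign
  have hpiece k (hk : k < n) := (hP.mono (hsub k hk)).abs_mul_le_of_sign (hx.le_succ hk)
    (he.mono_set (hsub k hk)) (hw.mono_set (hsub k hk)) (hA.mono (hx.Icc_subset hk))
    (fun t ht => hA0 t (hx.Icc_subset hk ht)) (fun t ht => hAS t (hx.Icc_subset hk ht))
    (hσ k hk) (hsign k hk) hM hε
  obtain ⟨rfl, rfl⟩ := And.intro hx.zero_eq hx.last_eq
  exact ⟨mul_integral_sub_le_integral_of_partition (fun k hk => hf.mono_set (hsub k hk))
      (fun k hk => hg.mono_set (hsub k hk)) fun k hk => (hpiece k hk).1,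
    mul_integral_sub_le_integral_of_partition (fun k hk => hf.mono_set (hsub k hk))
      (fun k hk => (he.abs.add hg).mono_set (hsub k hk)) fun k hk => (hpiece k hk).2⟩

end SignPartition

section APrioriBounds

open Set

variable {𝕜 : Type*} [RCLike 𝕜] {F f : ℝ → 𝕜} {a b : ℝ}

theorem IsPrimitiveOn.sqrt_integral_norm_sq_le {α : ℝ} (hF : IsPrimitiveOn F f a b) (hab : a < b)
    (hf : ContinuousOn f (Icc a b)) (hα : 0 ≤ α)
    (h : ∀ S, (∀ y ∈ Icc a b, ‖F y‖ ^ 2 ≤ S) → ∫ t in a..b, ‖f t‖ ^ 2 ≤ α * S) :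
    √(∫ t in a..b, ‖f t‖ ^ 2) ≤
      (√(α * (1 / (b - a) + α)) + α) * √(∫ t in a..b, ‖F t‖ ^ 2) := by
  have hFc : ContinuousOn F (Icc a b) := by simpa only [uIcc_of_le hab.le] using hF.continuousOn
  have hsq {g : ℝ → 𝕜} : √(∫ t in a..b, ‖g t‖ ^ 2) ^ 2 = ∫ t in a..b, ‖g t‖ ^ 2 :=
    Real.sq_sqrt (intervalIntegral.integral_nonneg hab.le fun t _ => by positivity)
  have hCS := intervalIntegral_norm_mul_norm_le_sqrt_mul_sqrt hab.le hf hFc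
  refine le_sqrt_add_mul_of_sq_le (Real.sqrt_nonneg _) ?_
  rw [hsq, hsq, mul_one_div]
  refine (h _ fun y hy => hF.norm_sq_le hab hy).trans (mul_le_mul_of_nonneg_left ?_ hα)
  simp only [mul_comm ‖F _‖]
  gcongr

theorem IsPrimitiveOn.integral_norm_mul_norm_le {β : ℝ} (hF : IsPrimitiveOn F f a b) (hab : a ≤ b)
    (hf : ContinuousOn f (Icc a b))
    (h : √(∫ t in a..b, ‖f t‖ ^ 2) ≤ β * √(∫ t in a..b, ‖F t‖ ^ 2)) :
    ∫ t in a..b, ‖f t‖ * ‖F t‖ ≤ β * ∫ t in a..b, ‖F t‖ ^ 2 := by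
  have hFc : ContinuousOn F (Icc a b) := by simpa only [uIcc_of_le hab] using hF.continuousOn
  calc ∫ t in a..b, ‖f t‖ * ‖F t‖
      ≤ √(∫ t in a..b, ‖f t‖ ^ 2) * √(∫ t in a..b, ‖F t‖ ^ 2) :=
        intervalIntegral_norm_mul_norm_le_sqrt_mul_sqrt hab hf hFc
    _ ≤ β * √(∫ t in a..b, ‖F t‖ ^ 2) * √(∫ t in a..b, ‖F t‖ ^ 2) := by gcongr
    _ = β * ∫ t in a..b, ‖F t‖ ^ 2 := by
        rw [mul_assoc, Real.mul_self_sqrt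
          (intervalIntegral.integral_nonneg hab fun t _ => by positivity)]

theorem IsPrimitiveOn.norm_sq_le_mul_integral_norm_sq {β y : ℝ} (hF : IsPrimitiveOn F f a b)
    (hab : a < b) (hf : ContinuousOn f (Icc a b))
    (h : √(∫ t in a..b, ‖f t‖ ^ 2) ≤ β * √(∫ t in a..b, ‖F t‖ ^ 2)) (hy : y ∈ Icc a b) :
    ‖F y‖ ^ 2 ≤ (2 * β + 1 / (b - a)) * ∫ t in a..b, ‖F t‖ ^ 2 := by
  have hmul := hF.integral_norm_mul_norm_le hab.le hf h
  have hsup := hF.norm_sq_le hab hy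
  simp only [mul_comm ‖F _‖] at hsup
  calc ‖F y‖ ^ 2
      ≤ 2 * (β * ∫ t in a..b, ‖F t‖ ^ 2) + (∫ t in a..b, ‖F t‖ ^ 2) / (b - a) := by linarith
    _ = _ := by ring

end APrioriBounds

section SturmLiouville

open Set ComplexConjugate

/-- `φ` solves `-φ'' + q φ = lam w φ` on `[a, b]` with derivative `u`, in the integrated form of
the equation. -/
structure IsSturmLiouvilleSolution (q w : ℝ → ℝ) (lam : ℂ) (φ u : ℝ → ℂ) (a b : ℝ) : Prop where
  isPrimitiveOn_left : IsPrimitiveOn φ u a b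
  isPrimitiveOn_right : IsPrimitiveOn u (fun t => (q t - lam * w t) * φ t) a b

namespace IsSturmLiouvilleSolution

variable {q w : ℝ → ℝ} {lam : ℂ} {φ u : ℝ → ℂ} {a b : ℝ}

theorem isPrimitiveOn_mul_conj (h : IsSturmLiouvilleSolution q w lam φ u a b) :
    IsPrimitiveOn (fun t => u t * conj (φ t))
      (fun t => ((‖u t‖ ^ 2 + q t * ‖φ t‖ ^ 2 : ℝ) : ℂ) - lam * (w t * ‖φ t‖ ^ 2 : ℝ)) a b := by
  have hderiv : (fun t => ((‖u t‖ ^ 2 + q t * ‖φ t‖ ^ 2 : ℝ) : ℂ) - lam * (w t * ‖φ t‖ ^ 2 : ℝ)) =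
      fun t => u t • conj (u t) + ((q t - lam * w t) * φ t) • conj (φ t) := by
    funext t
    simp only [smul_eq_mul, mul_assoc, Complex.mul_conj', ofReal_add, ofReal_mul, ofReal_pow]
    ring
  rw [hderiv]
  exact h.isPrimitiveOn_right.smul h.isPrimitiveOn_left.conj

theorem intervalIntegrable_energy (h : IsSturmLiouvilleSolution q w lam φ u a b)
    (hq : IntervalIntegrable q volume a b) :
    IntervalIntegrable (fun t => ‖u t‖ ^ 2 + q t * ‖φ t‖ ^ 2) volume a b :=
  (h.isPrimitiveOn_right.continuousOn.norm.pow 2).intervalIntegrable.add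
    (hq.mul_continuousOn (h.isPrimitiveOn_left.continuousOn.norm.pow 2))

theorem integral_norm_sq_le {c S : ℝ} (h : IsSturmLiouvilleSolution q w lam φ u a b)
    (hab : a ≤ b) (hq : IntervalIntegrable q volume a b) (hw : IntervalIntegrable w volume a b)
    (hlam : lam.im ≠ 0) (hc : 0 ≤ c)
    (him : (u b * conj (φ b)).im = (u a * conj (φ a)).im)
    (hre : (u b * conj (φ b) - u a * conj (φ a)).re ≤ c * max (‖φ a‖ ^ 2) (‖φ b‖ ^ 2))
    (hS : ∀ y ∈ Icc a b, ‖φ y‖ ^ 2 ≤ S) :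
    ∫ t in a..b, ‖u t‖ ^ 2 ≤ (c + ∫ t in a..b, |min (q t) 0|) * S := by
  have hu : IntervalIntegrable (fun t => ‖u t‖ ^ 2) volume a b :=
    (h.isPrimitiveOn_right.continuousOn.norm.pow 2).intervalIntegrable
  have hφ := h.isPrimitiveOn_left.continuousOn.norm.pow 2
  have hqneg : IntervalIntegrable (fun t => |min (q t) 0|) volume a b :=
    IntervalIntegrable.abs ⟨hq.1.inf (integrable_zero _ _ _), hq.2.inf (integrable_zero _ _ _)⟩
  have henergy := h.isPrimitiveOn_mul_conj.integral_eq_re_sub (h.intervalIntegrable_energy hq)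
    (hw.mul_continuousOn hφ) hlam him
  calc ∫ t in a..b, ‖u t‖ ^ 2
      ≤ ∫ t in a..b, (‖u t‖ ^ 2 + q t * ‖φ t‖ ^ 2 + |min (q t) 0| * S) := by
        refine intervalIntegral.integral_mono_on hab hu
          ((h.intervalIntegrable_energy hq).add (hqneg.mul_const S)) fun t ht => ?_
        have hlower : -|min (q t) 0| ≤ q t := (neg_abs_le _).trans (min_le_left _ _)
        nlinarith [hS t ht, abs_nonneg (min (q t) 0), sq_nonneg ‖φ t‖]
    _ = (u b * conj (φ b) - u a * conj (φ a)).re + (∫ t in a..b, |min (q t) 0|) * S := by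
        rw [intervalIntegral.integral_add (h.intervalIntegrable_energy hq) (hqneg.mul_const S),
          intervalIntegral.integral_mul_const, henergy]
    _ ≤ c * S + (∫ t in a..b, |min (q t) 0|) * S := by
        have hmax := max_le (hS a (left_mem_Icc.mpr hab)) (hS b (right_mem_Icc.mpr hab))
        gcongr
        exact hre.trans (by gcongr)
    _ = _ := by ring

theorem integral_abs_energy_le {S : ℝ} (h : IsSturmLiouvilleSolution q w lam φ u a b)
    (hab : a ≤ b) (hq : IntervalIntegrable q volume a b) (hS : ∀ y ∈ Icc a b, ‖φ y‖ ^ 2 ≤ S) :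
    ∫ t in a..b, |‖u t‖ ^ 2 + q t * ‖φ t‖ ^ 2| ≤
      (∫ t in a..b, ‖u t‖ ^ 2) + S * ∫ t in a..b, |q t| := by
  have hu : IntervalIntegrable (fun t => ‖u t‖ ^ 2) volume a b :=
    (h.isPrimitiveOn_right.continuousOn.norm.pow 2).intervalIntegrable
  rw [← intervalIntegral.integral_const_mul,
    ← intervalIntegral.integral_add hu (hq.abs.const_mul S)]
  refine intervalIntegral.integral_mono_on hab (h.intervalIntegrable_energy hq).abs
    (hu.add (hq.abs.const_mul S)) fun t ht => (abs_add_le _ _).trans ?_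
  rw [abs_mul, abs_sq, abs_sq, mul_comm S]
  gcongr
  exact hS t ht

theorem integral_norm_sq_pos (h : IsSturmLiouvilleSolution q w lam φ u a b) (hab : a < b)
    (hne : ∃ y ∈ Icc a b, φ y ≠ 0) : 0 < ∫ t in a..b, ‖φ t‖ ^ 2 := by
  obtain ⟨y, hy, hφy⟩ := hne
  have hφ := h.isPrimitiveOn_left.continuousOn.norm.pow 2
  rw [uIcc_of_le hab.le] at hφ
  exact intervalIntegral.integral_pos hab hφ (fun t _ => by positivity)
    ⟨y, hy, by positivity⟩

theorem half_integral_norm_sq_le {γ ε : ℝ} {n : ℕ} (h : IsSturmLiouvilleSolution q w lam φ u a b)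
    (hab : a ≤ b) (hw : IntervalIntegrable w volume a b) (hn : 0 < n) (hγ : 0 < γ)
    (hεcond : volume {t | t ∈ Ioo a b ∧ |w t| < ε} ≤ ENNReal.ofReal (1 / (4 * γ ^ 2))) :
    (∫ t in a..b, ‖φ t‖ ^ 2) / 2 ≤
      (∫ t in a..b, (‖φ t‖ ^ 2 -
        {t | |w t| < ε}.indicator (fun _ => γ ^ 2 * ∫ t in a..b, ‖φ t‖ ^ 2) t)) -
      n * ((γ ^ 2 * ∫ t in a..b, ‖φ t‖ ^ 2) / (4 * γ ^ 2 * n)) := by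
  have hφ : IntervalIntegrable (fun t => ‖φ t‖ ^ 2) volume a b :=
    (h.isPrimitiveOn_left.continuousOn.norm.pow 2).intervalIntegrable
  have hN : 0 ≤ ∫ t in a..b, ‖φ t‖ ^ 2 :=
    intervalIntegral.integral_nonneg hab fun t _ => by positivity
  have hind := integral_indicator_abs_lt_le hab hw (mul_nonneg (sq_nonneg γ) hN)
    (by positivity) hεcond
  rw [intervalIntegral.integral_sub hφ (intervalIntegrable_indicator_abs_lt hw ε _)]
  have hquarter : (γ ^ 2 * ∫ t in a..b, ‖φ t‖ ^ 2) * (1 / (4 * γ ^ 2)) =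
      (∫ t in a..b, ‖φ t‖ ^ 2) / 4 := by field
  have hquarter' : n * ((γ ^ 2 * ∫ t in a..b, ‖φ t‖ ^ 2) / (4 * γ ^ 2 * n)) =
      (∫ t in a..b, ‖φ t‖ ^ 2) / 4 := by field
  linarith

theorem abs_im_le_and_abs_re_le_of_apriori {β γ ε : ℝ} {n : ℕ} {x : ℕ → ℝ}
    (h : IsSturmLiouvilleSolution q w lam φ u a b) (hab : a < b)
    (hq : IntervalIntegrable q volume a b) (hw : IntervalIntegrable w volume a b)
    (hne : ∃ y ∈ Icc a b, φ y ≠ 0) (hx : IsSignPartition w a b n x)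
    (hu : √(∫ t in a..b, ‖u t‖ ^ 2) ≤ β * √(∫ t in a..b, ‖φ t‖ ^ 2)) (hγ : 0 < γ)
    (hφ : ∀ y ∈ Icc a b, ‖φ y‖ ^ 2 ≤ γ ^ 2 * ∫ t in a..b, ‖φ t‖ ^ 2) (hε : 0 < ε)
    (hεcond : volume {t | t ∈ Ioo a b ∧ |w t| < ε} ≤ ENNReal.ofReal (1 / (4 * γ ^ 2))) :
    |lam.im| ≤ 8 / ε * β * γ ^ 2 * n ∧
      |lam.re| ≤ 2 / ε * (4 * β * γ ^ 2 * n + β ^ 2 + γ ^ 2 * ∫ t in a..b, |q t|) := by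
  have hn : 0 < n := hx.pos hab
  have hφc : ContinuousOn φ (Icc a b) := by
    simpa only [uIcc_of_le hab.le] using h.isPrimitiveOn_left.continuousOn
  have huc : ContinuousOn u (Icc a b) := by
    simpa only [uIcc_of_le hab.le] using h.isPrimitiveOn_right.continuousOn
  have hN := h.integral_norm_sq_pos hab hne
  have hhalf := h.half_integral_norm_sq_le hab.le hw hn hγ hεcond
  obtain ⟨him, hre⟩ := h.isPrimitiveOn_mul_conj.abs_mul_le_of_isSignPartition hab.le hx
    (h.intervalIntegrable_energy hq) hw (hφc.norm.pow 2) (fun t _ => by positivity) hφ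
    (M := 4 * γ ^ 2 * n) (by positivity) hε.le
  have hboundary : ∫ t in a..b, 4 * γ ^ 2 * n * ‖u t * conj (φ t)‖ ≤
      4 * γ ^ 2 * n * (β * ∫ t in a..b, ‖φ t‖ ^ 2) := by
    simp only [intervalIntegral.integral_const_mul, norm_mul, RCLike.norm_conj]
    gcongr
    exact h.isPrimitiveOn_left.integral_norm_mul_norm_le hab.le huc hu
  have hkinetic : ∫ t in a..b, ‖u t‖ ^ 2 ≤ β ^ 2 * ∫ t in a..b, ‖φ t‖ ^ 2 := by
    have hsq := (Real.sqrt_le_left (hu.trans' (Real.sqrt_nonneg _))).mp hu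
    rwa [mul_pow, Real.sq_sqrt hN.le] at hsq
  have henergy := h.integral_abs_energy_le hab.le hq hφ
  rw [intervalIntegral.integral_add (h.intervalIntegrable_energy hq).abs
    (h.isPrimitiveOn_mul_conj.continuousOn.norm.intervalIntegrable.const_mul _)] at hre
  constructor
  · refine (le_two_div_mul_of_mul_mul_le (R := 4 * γ ^ 2 * n * β) (abs_nonneg _) hε hN hhalf
      ?_).trans_eq (by ring)
    linarith
  · refine le_two_div_mul_of_mul_mul_le (abs_nonneg _) hε hN hhalf ?_
    linarith

end IsSturmLiouvilleSolution

theorem nonreal_eigenvalue_bounds_turning_points_general {q w : ℝ → ℝ} {lam : ℂ} {φ u : ℝ → ℂ}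
    {a b c α β γ ε : ℝ} {n : ℕ} {x : ℕ → ℝ} (h : IsSturmLiouvilleSolution q w lam φ u a b)
    (hab : a < b) (hq : IntervalIntegrable q volume a b) (hw : IntervalIntegrable w volume a b)
    (hx : IsSignPartition w a b n x) (hlam : lam.im ≠ 0) (hne : ∃ y ∈ Icc a b, φ y ≠ 0)
    (hc : 0 ≤ c) (him : (u b * conj (φ b)).im = (u a * conj (φ a)).im)
    (hre : (u b * conj (φ b) - u a * conj (φ a)).re ≤ c * max (‖φ a‖ ^ 2) (‖φ b‖ ^ 2))
    (hα : α = c + ∫ t in a..b, |min (q t) 0|) (hβ : β = √(α * (1 / (b - a) + α)) + α)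
    (hγ : γ = √(2 * β + 1 / (b - a))) (hε : 0 < ε)
    (hεcond : volume {t | t ∈ Ioo a b ∧ |w t| < ε} ≤ ENNReal.ofReal (1 / (4 * γ ^ 2))) :
    |lam.im| ≤ 8 / ε * β * γ ^ 2 * n ∧
      |lam.re| ≤ 2 / ε * (4 * β * γ ^ 2 * n + β ^ 2 + γ ^ 2 * ∫ t in a..b, |q t|) := by
  have huc : ContinuousOn u (Icc a b) := by
    simpa only [uIcc_of_le hab.le] using h.isPrimitiveOn_right.continuousOn
  have hα0 : 0 ≤ α :=
    hα ▸ add_nonneg hc (intervalIntegral.integral_nonneg hab.le fun _ _ => abs_nonneg _)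
  have hβ0 : 0 ≤ β := hβ ▸ by positivity
  have hpos : 0 < 2 * β + 1 / (b - a) :=
    add_pos_of_nonneg_of_pos (by positivity) (one_div_pos.mpr (sub_pos.mpr hab))
  have hu : √(∫ t in a..b, ‖u t‖ ^ 2) ≤ β * √(∫ t in a..b, ‖φ t‖ ^ 2) :=
    hβ ▸ h.isPrimitiveOn_left.sqrt_integral_norm_sq_le hab huc hα0 fun S hS =>
      hα ▸ h.integral_norm_sq_le hab.le hq hw hlam hc him hre hS
  refine h.abs_im_le_and_abs_re_le_of_apriori hab hq hw hne hx hu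
    (hγ ▸ Real.sqrt_pos.mpr hpos) (fun y hy => ?_) hε hεcond
  rw [hγ, Real.sq_sqrt hpos.le]
  exact h.isPrimitiveOn_left.norm_sq_le_mul_integral_norm_sq hab huc hu hy

theorem im_mul_conj_of_eq_ofReal_mul {l : ℝ} {z v : ℂ} (h : v = l * z) :
    (v * conj z).im = 0 := by
  rw [h, mul_assoc, Complex.mul_conj', ← ofReal_pow, ← ofReal_mul, ofReal_im]

theorem re_mul_conj_of_eq_ofReal_mul {l : ℝ} {z v : ℂ} (h : v = l * z) :
    (v * conj z).re = l * ‖z‖ ^ 2 := by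
  rw [h, mul_assoc, Complex.mul_conj', ← ofReal_pow, ← ofReal_mul, ofReal_re]

theorem re_mul_conj_sub_le_of_separated {l r : ℝ} {z₁ v₁ z₂ v₂ : ℂ} (h₁ : v₁ = l * z₁)
    (h₂ : v₂ = r * z₂) :
    (v₂ * conj z₂ - v₁ * conj z₁).re ≤ (|l| + |r|) * max (‖z₁‖ ^ 2) (‖z₂‖ ^ 2) := by
  rw [sub_re, re_mul_conj_of_eq_ofReal_mul h₁, re_mul_conj_of_eq_ofReal_mul h₂, add_mul]
  have hl : -(l * ‖z₁‖ ^ 2) ≤ |l| * max (‖z₁‖ ^ 2) (‖z₂‖ ^ 2) :=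
    calc -(l * ‖z₁‖ ^ 2) = -l * ‖z₁‖ ^ 2 := by ring
      _ ≤ _ := by gcongr; exacts [neg_le_abs l, le_max_left _ _]
  have hr : r * ‖z₂‖ ^ 2 ≤ |r| * max (‖z₁‖ ^ 2) (‖z₂‖ ^ 2) := by
    gcongr
    exacts [le_abs_self r, le_max_right _ _]
  linarith

theorem IsSturmLiouvilleSolution.of_continuousOn {q w : ℝ → ℝ} {lam : ℂ} {φ u : ℝ → ℂ} {a b : ℝ}
    (hab : a ≤ b) (hq : IntervalIntegrable q volume a b) (hw : IntervalIntegrable w volume a b)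
    (hu : ContinuousOn u (Icc a b)) (hφu : ∀ y ∈ Icc a b, φ y = φ a + ∫ t in a..y, u t)
    (huφ : ∀ y ∈ Icc a b, u y = u a + ∫ t in a..y, ((q t : ℂ) - lam * w t) * φ t) :
    IsSturmLiouvilleSolution q w lam φ u a b := by
  rw [← uIcc_of_le hab] at hu hφu huφ
  have hφ : IsPrimitiveOn φ u a b := ⟨hu.intervalIntegrable, hφu⟩
  have hqC : IntervalIntegrable (fun t => (q t : ℂ)) volume a b := ⟨hq.1.ofReal, hq.2.ofReal⟩
  have hwC : IntervalIntegrable (fun t => (w t : ℂ)) volume a b := ⟨hw.1.ofReal, hw.2.ofReal⟩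
  exact ⟨hφ, (hqC.sub (hwC.const_mul lam)).mul_continuousOn hφ.continuousOn, huφ⟩

end SturmLiouville

/-- Corollary 3.3 of the paper (for separated self-adjoint boundary conditions):
if p = 1 and the weight w has exactly n turning points, then the non-real
eigenvalues satisfy |Im λ| ≤ (8/ε)βγ²(n+1) and
|Re λ| ≤ (2/ε)(4βγ²(n+1) + β² + γ²‖q‖₁). -/
theorem nonreal_eigenvalue_bounds_turning_points
    (a b : ℝ) (hab : a < b) (q w : ℝ → ℝ)
    (hqm : Measurable q) (hwm : Measurable w)
    (hq_int : IntegrableOn q (Set.Ioc a b))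
    (hw_int : IntegrableOn w (Set.Ioc a b))
    (hw_ne : ∀ᵐ x ∂(volume.restrict (Set.Ioc a b)), w x ≠ 0)
    (hw_pos : 0 < volume {x ∈ Set.Ioc a b | 0 < w x})
    (hw_neg : 0 < volume {x ∈ Set.Ioc a b | w x < 0})
    -- w has exactly n turning points x 1 < … < x n in (a,b)
    (n : ℕ) (x : ℕ → ℝ) (hx0 : x 0 = a) (hxlast : x (n + 1) = b)
    (hxmono : ∀ k ≤ n, x k < x (k + 1))
    (s : ℝ) (hs : s = 1 ∨ s = -1)
    (hsign : ∀ k ≤ n, ∀ᵐ t ∂(volume.restrict (Set.Ioo (x k) (x (k + 1)))),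
        0 < s * (-1 : ℝ) ^ k * w t)
    (l r : ℝ) (c α β γ : ℝ)
    (hc : c = |l| + |r|)
    (hα : α = c + ∫ t in a..b, |min (q t) 0|)
    (hβ : β = Real.sqrt (α * (1 / (b - a) + α)) + α)
    (hγ : γ = Real.sqrt (2 * β + 1 / (b - a)))
    (ε : ℝ) (hε : 0 < ε)
    (hεcond : volume {x | x ∈ Set.Ioo a b ∧ |w x| < ε}
        ≤ ENNReal.ofReal (1 / (4 * γ ^ 2))) :
    ∀ lam : ℂ, lam.im ≠ 0 →
      ∀ φ u : ℝ → ℂ,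
        ContinuousOn φ (Set.Icc a b) → ContinuousOn u (Set.Icc a b) →
        (∀ y ∈ Set.Icc a b, φ y = φ a + ∫ t in a..y, u t) →
        (∀ y ∈ Set.Icc a b,
            u y = u a + ∫ t in a..y, ((q t : ℂ) - lam * (w t : ℂ)) * φ t) →
        (∃ y ∈ Set.Icc a b, φ y ≠ 0) →
        u a = (l : ℂ) * φ a → u b = (r : ℂ) * φ b →
        |lam.im| ≤ 8 / ε * β * γ ^ 2 * (n + 1)
          ∧ |lam.re| ≤ 2 / ε *
              (4 * β * γ ^ 2 * (n + 1) + β ^ 2 + γ ^ 2 * ∫ t in a..b, |q t|) := by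
  intro lam hlam φ u _ hu hφu huφ hne hl hr
  rw [← intervalIntegrable_iff_integrableOn_Ioc_of_le hab.le] at hq_int hw_int
  have hsol := IsSturmLiouvilleSolution.of_continuousOn hab.le hq_int hw_int hu hφu huφ
  have hx := IsSignPartition.of_alternating hx0 hxlast (fun k hk => (hxmono k hk).le)
    (by rcases hs with rfl | rfl <;> simp) fun k hk => (hsign k hk).mono fun _ => le_of_lt
  have him := (im_mul_conj_of_eq_ofReal_mul hr).trans (im_mul_conj_of_eq_ofReal_mul hl).symm
  have hre := re_mul_conj_sub_le_of_separated hl hr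
  rw [← hc] at hre
  exact_mod_cast nonreal_eigenvalue_bounds_turning_points_general hsol hab hq_int hw_int hx hlam hne
    (hc ▸ by positivity) him hre hα hβ hγ hε hεcond
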